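/- Let X be a real Banach space that is 2-convex and 2-smooth, take p = 2, and let M, N be closed linear subspaces of X such that M + N is closed. Then the pair (M,N) is linear Bregman regular: there is a constant κ > 0 such that D_2(Π²_{M∩N} x, x) ≤ κ · max{D_2(Π²_M x, x), D_2(Π²_N x, x)} for all x ∈ X. -/

import Mathlib

open Filter Topology

noncomputable section

/-- The modulus of convexity of a normed space `X`. -/
def modConvex (X : Type*) [NormedAddCommGroup X] (ε : ℝ) : ℝ :=
  sInf {d : ℝ | ∃ x y : X, ‖x‖ = 1 ∧ ‖y‖ = 1 ∧ ε ≤ ‖x - y‖ ∧ d = 1 - ‖x + y‖ / 2}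

/-- The modulus of smoothness of a normed space `X`. -/
def modSmooth (X : Type*) [NormedAddCommGroup X] [NormedSpace ℝ X] (τ : ℝ) : ℝ :=
  sSup {d : ℝ | ∃ x y : X, ‖x‖ = 1 ∧ ‖y‖ = 1 ∧ d = (‖x + τ • y‖ + ‖x - τ • y‖) / 2 - 1}

/-- `X` is uniformly convex: the modulus of convexity is positive for positive ε. -/
def UnifConvex (X : Type*) [NormedAddCommGroup X] : Prop :=
  ∀ ε : ℝ, 0 < ε → ε ≤ 2 → 0 < modConvex X ε

/-- `X` is uniformly smooth: `ρ_X(τ)/τ → 0` as `τ → 0⁺`. -/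
def UnifSmooth (X : Type*) [NormedAddCommGroup X] [NormedSpace ℝ X] : Prop :=
  Tendsto (fun τ => modSmooth X τ / τ) (𝓝[>] (0 : ℝ)) (𝓝 0)

/-- `X` is uniformly convex of power type `ρ`. -/
def PowerConvex (X : Type*) [NormedAddCommGroup X] (ρ : ℝ) : Prop :=
  ∃ c > (0 : ℝ), ∀ ε ∈ Set.Icc (0 : ℝ) 2, c * ε ^ ρ ≤ modConvex X ε

/-- `X` is uniformly smooth of power type `σ` (with `σ > 1`). -/
def PowerSmooth (X : Type*) [NormedAddCommGroup X] [NormedSpace ℝ X] (σ : ℝ) : Prop :=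
  1 < σ ∧ ∃ C > (0 : ℝ), ∀ τ ∈ Set.Icc (0 : ℝ) 1, modSmooth X τ ≤ C * τ ^ σ

variable {X : Type*} [NormedAddCommGroup X] [NormedSpace ℝ X]

/-- The duality mapping `j_p`, the Fréchet derivative of `x ↦ (1/p)‖x‖^p`. -/
def dualityMap (p : ℝ) (x : X) : X →L[ℝ] ℝ :=
  fderiv ℝ (fun y : X => 1 / p * ‖y‖ ^ p) x

/-- The Bregman distance `D_p(x, y)`. -/
def bregmanDist (p : ℝ) (x y : X) : ℝ :=
  1 / p * ‖x‖ ^ p - 1 / p * ‖y‖ ^ p - dualityMap p y (x - y)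

/-- The Bregman projection of `x` onto the set `S`: the minimizer of `m ↦ D_p(m, x)` over `S`. -/
def bregmanProj (p : ℝ) (S : Set X) (x : X) : X :=
  letI : Nonempty X := ⟨x⟩
  Classical.epsilon fun y => y ∈ S ∧ ∀ m ∈ S, bregmanDist p y x ≤ bregmanDist p m x

/-- The Bregman distance `D_p(S, x)` from the point `x` to the set `S`. -/
def bregmanDistSet (p : ℝ) (S : Set X) (x : X) : ℝ :=
  bregmanDist p (bregmanProj p S x) x

/-- The metric projection of `x` onto the set `S`: the point of `S` nearest to `x`. -/
def metricProj (S : Set X) (x : X) : X :=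
  letI : Nonempty X := ⟨x⟩
  Classical.epsilon fun y => y ∈ S ∧ ∀ m ∈ S, ‖x - y‖ ≤ ‖x - m‖

/-!
On a 2-convex, 2-smooth space `D_2(x, y)` lies between two positive multiples of `‖x - y‖²`: the
lower bound compares `(1/2)‖·‖²` at the midpoint of `x` and `y` with its tangent at `y`, and the
upper bound adds `D_2(y - h, y) ≥ 0` to `D_2(y + h, y)`, where `h = x - y`. Hence the Bregman
distance from `x` to a closed convex set is comparable with the square of the metric distance, and
linear Bregman regularity follows from linear regularity. For closed subspaces `M`, `N` with
`M + N` closed the latter comes from the open mapping theorem for `M × N → M + N`: if `m ∈ M` and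
`n ∈ N` are near `x`, then `m - n = m' + n'` with `‖m'‖ ≤ K ‖m - n‖`, and `m - m' = n + n'` is a
point of `M ∩ N` near `x`.
-/

section StrongConvexity

variable {E : Type*} [NormedAddCommGroup E] [NormedSpace ℝ E] {s : Set E} {f : E → ℝ} {m : ℝ}

lemma mul_norm_sub_sq_le_of_strongConvexOn (hf : StrongConvexOn s m f) {I : ℝ}
    (hI : ∀ z ∈ s, I ≤ f z) {x y : E} (hx : x ∈ s) (hy : y ∈ s) :
    m / 4 * ‖x - y‖ ^ 2 ≤ (f x - I) + (f y - I) := by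
  have hhalf : (0 : ℝ) ≤ 1 / 2 := by norm_num
  have hmid := hf.2 hx hy hhalf hhalf (add_halves 1)
  have hmem := hf.1 hx hy hhalf hhalf (add_halves 1)
  simp only [smul_eq_mul] at hmid
  linarith [hI _ hmem]

theorem exists_isMinOn_of_strongConvexOn (hf : StrongConvexOn s m f) (hm : 0 < m)
    (hlsc : LowerSemicontinuousOn f s) (hbdd : BddBelow (f '' s)) (hs : IsComplete s)
    (hne : s.Nonempty) : ∃ x ∈ s, IsMinOn f s x := by
  have hI : ∀ z ∈ s, sInf (f '' s) ≤ f z := fun z hz => csInf_le hbdd ⟨z, hz, rfl⟩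
  obtain ⟨v, -, hv, hvs⟩ := exists_seq_tendsto_sInf (hne.image f) hbdd
  choose u hus huv using hvs
  obtain rfl : f ∘ u = v := funext huv
  set I := sInf (f '' s)
  have hgap : Tendsto (fun n : ℕ × ℕ => √(4 / m * ((f (u n.1) - I) + (f (u n.2) - I))))
      atTop (𝓝 0) := by
    have hgap₀ : Tendsto (fun n => f (u n) - I) atTop (𝓝 0) := by
      simpa only [sub_self, Function.comp_apply] using hv.sub_const I
    rw [← prod_atTop_atTop_eq]
    simpa using (((hgap₀.comp tendsto_fst).add (hgap₀.comp tendsto_snd)).const_mul (4 / m)).sqrt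
  have hcauchy : CauchySeq u := by
    rw [cauchySeq_iff_tendsto_dist_atTop_0]
    refine squeeze_zero (fun _ => dist_nonneg) (fun n => Real.le_sqrt_of_sq_le ?_) hgap
    have hclose := mul_norm_sub_sq_le_of_strongConvexOn hf hI (hus n.1) (hus n.2)
    calc dist (u n.1) (u n.2) ^ 2 = 4 / m * (m / 4 * ‖u n.1 - u n.2‖ ^ 2) := by
          rw [dist_eq_norm]; field_simp
      _ ≤ _ := by gcongr
  obtain ⟨x, hxs, hux⟩ := cauchySeq_tendsto_of_isComplete hs hus hcauchy
  have hux' : Tendsto u atTop (𝓝[s] x) :=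
    tendsto_nhdsWithin_iff.2 ⟨hux, Eventually.of_forall hus⟩
  have hxI : f x ≤ I := le_of_forall_lt_imp_le_of_dense fun a ha =>
    ge_of_tendsto hv ((hux'.eventually (hlsc x hxs a ha)).mono fun _ => le_of_lt)
  exact ⟨x, hxs, isMinOn_iff.2 fun z hz => hxI.trans (hI z hz)⟩

end StrongConvexity

section Subgradient

variable {E : Type*} [NormedAddCommGroup E] [NormedSpace ℝ E]

lemma hasFDerivAt_of_subgradient_of_add_le {f : E → ℝ} {φ : E →L[ℝ] ℝ} {x : E} {C : ℝ}
    (hφ : ∀ h, f x + φ h ≤ f (x + h))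
    (hC : ∀ h, f (x + h) + f (x - h) ≤ 2 * f x + C * ‖h‖ ^ 2) : HasFDerivAt f φ x := by
  have hO : (fun z => f z - (f x + φ (z - x))) =O[𝓝 x] fun z => ‖z - x‖ ^ 2 := by
    refine Asymptotics.IsBigO.of_bound C (Eventually.of_forall fun z => ?_)
    have hlow := hφ (z - x)
    have hlow' := hφ (-(z - x))
    have hup := hC (z - x)
    rw [map_neg, ← sub_eq_add_neg, ← sub_eq_add_neg] at hlow'
    rw [add_sub_cancel] at hlow hup
    rw [Real.norm_of_nonneg (by linarith), Real.norm_of_nonneg (by positivity)]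
    linarith
  have haff : HasFDerivAt (fun z => f x + φ (z - x)) φ x :=
    (φ.hasFDerivAt.comp x ((hasFDerivAt_id x).sub_const x)).const_add _
  have hsum := (hO.hasFDerivAt one_lt_two).add haff
  rw [zero_add] at hsum
  exact hsum.congr_of_eventuallyEq (Eventually.of_forall fun z => (sub_add_cancel _ _).symm)

lemma exists_subgradient_half_norm_sq (x : E) :
    ∃ φ : E →L[ℝ] ℝ, ∀ h, 1 / 2 * ‖x‖ ^ 2 + φ h ≤ 1 / 2 * ‖x + h‖ ^ 2 := by
  obtain ⟨g, hg, hgx⟩ := exists_dual_vector'' ℝ x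
  refine ⟨‖x‖ • g, fun h => ?_⟩
  have hgle : ‖x‖ + g h ≤ ‖x + h‖ := by
    calc ‖x‖ + g h = g (x + h) := by rw [map_add, hgx]; rfl
      _ ≤ ‖g (x + h)‖ := Real.le_norm_self _
      _ ≤ ‖x + h‖ := by simpa using g.le_of_opNorm_le hg (x + h)
  rw [smul_apply, smul_eq_mul]
  nlinarith [mul_le_mul_of_nonneg_left hgle (norm_nonneg x), sq_nonneg (‖x‖ - ‖x + h‖)]

end Subgradient

section Bregman

lemma bregmanDist_two (x y : X) : bregmanDist 2 x y =
    1 / 2 * ‖x‖ ^ 2 - 1 / 2 * ‖y‖ ^ 2 - dualityMap 2 y (x - y) := by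
  simp only [bregmanDist, Real.rpow_two]

lemma bregmanDist_three_point (p : ℝ) (x y z : X) : bregmanDist p x y =
    bregmanDist p x z + bregmanDist p z y + (dualityMap p z - dualityMap p y) (x - z) := by
  simp only [bregmanDist, sub_apply, map_sub]
  ring

lemma bregmanDist_two_nonneg (x : X) {y : X}
    (hy : DifferentiableAt ℝ (fun z : X => ‖z‖ ^ 2) y) : 0 ≤ bregmanDist 2 x y := by
  obtain ⟨φ, hφ⟩ := exists_subgradient_half_norm_sq y
  have hderiv : HasFDerivAt (fun z : X => 1 / 2 * ‖z‖ ^ 2) (dualityMap 2 y) y := by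
    simpa only [dualityMap, Real.rpow_two] using (hy.const_mul (1 / 2 : ℝ)).hasFDerivAt
  have hmin : IsLocalMin (fun z => 1 / 2 * ‖z‖ ^ 2 - φ z) y := by
    refine Eventually.of_forall fun z => ?_
    have hz := hφ (z - y)
    rw [add_sub_cancel, map_sub] at hz
    linarith
  have hφy : dualityMap 2 y = φ :=
    sub_eq_zero.1 (hmin.hasFDerivAt_eq_zero (hderiv.sub φ.hasFDerivAt))
  have hx := hφ (x - y)
  rw [add_sub_cancel] at hx
  rw [bregmanDist_two, hφy]
  linarith

lemma strongConvexOn_bregmanDist_two {c : ℝ}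
    (hlow : ∀ x y : X, c * ‖x - y‖ ^ 2 ≤ bregmanDist 2 x y) {S : Set X} (hS : Convex ℝ S) (x : X) :
    StrongConvexOn S (2 * c) fun y => bregmanDist 2 y x := by
  refine ⟨hS, fun u _ v _ a b ha hb hab => ?_⟩
  set z := a • u + b • v with hz
  obtain rfl : b = 1 - a := by linarith
  have huz : u - z = (1 - a) • (u - v) := by rw [hz]; module
  have hvz : v - z = (-a) • (u - v) := by rw [hz]; module
  have hu := hlow u z
  have hv := hlow v z
  rw [huz, norm_smul, mul_pow, Real.norm_eq_abs, sq_abs] at hu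
  rw [hvz, norm_smul, mul_pow, Real.norm_eq_abs, sq_abs] at hv
  simp only [smul_eq_mul]
  -- Expanding both distances around `z` leaves terms linear in `u - v`; averaging cancels them.
  rw [bregmanDist_three_point 2 u x z, bregmanDist_three_point 2 v x z, huz, hvz, map_smul,
    map_smul, smul_eq_mul, smul_eq_mul]
  linarith [mul_le_mul_of_nonneg_left hu ha, mul_le_mul_of_nonneg_left hv hb]

lemma bregmanProj_spec {p : ℝ} {S : Set X} {x : X}
    (h : ∃ y ∈ S, IsMinOn (fun m => bregmanDist p m x) S y) :
    bregmanProj p S x ∈ S ∧ ∀ m ∈ S, bregmanDistSet p S x ≤ bregmanDist p m x := by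
  simp only [isMinOn_iff] at h
  exact Classical.epsilon_spec h

theorem bregmanProj_two_spec {c : ℝ} (hc : 0 < c)
    (hlow : ∀ x y : X, c * ‖x - y‖ ^ 2 ≤ bregmanDist 2 x y) {S : Set X} (hS : IsComplete S)
    (hconv : Convex ℝ S) (hne : S.Nonempty) (x : X) :
    bregmanProj 2 S x ∈ S ∧ ∀ m ∈ S, bregmanDistSet 2 S x ≤ bregmanDist 2 m x := by
  have hcont : Continuous fun m : X => bregmanDist 2 m x := by
    simp only [bregmanDist_two]
    fun_prop
  have hbdd : BddBelow ((fun m => bregmanDist 2 m x) '' S) := by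
    refine ⟨0, ?_⟩
    rintro _ ⟨m, -, rfl⟩
    exact le_trans (by positivity) (hlow m x)
  exact bregmanProj_spec <|
    exists_isMinOn_of_strongConvexOn (strongConvexOn_bregmanDist_two hlow hconv x) (by positivity)
      (hcont.lowerSemicontinuous.lowerSemicontinuousOn S) hbdd hS hne

lemma mul_infDist_sq_le_bregmanDistSet {p c : ℝ} (hc : 0 ≤ c) {S : Set X} {x : X}
    (hlow : ∀ m ∈ S, c * ‖m - x‖ ^ 2 ≤ bregmanDist p m x) (hmem : bregmanProj p S x ∈ S) :
    c * Metric.infDist x S ^ 2 ≤ bregmanDistSet p S x := by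
  have hdist : Metric.infDist x S ≤ ‖bregmanProj p S x - x‖ := by
    simpa only [dist_eq_norm'] using Metric.infDist_le_dist_of_mem hmem
  calc c * Metric.infDist x S ^ 2 ≤ c * ‖bregmanProj p S x - x‖ ^ 2 := by
        gcongr
        exact Metric.infDist_nonneg
    _ ≤ bregmanDistSet p S x := hlow _ hmem

lemma bregmanDistSet_le_mul_infDist_sq {p C : ℝ} (hC : 0 < C) {S : Set X} (hne : S.Nonempty)
    {x : X} (hup : ∀ m ∈ S, bregmanDist p m x ≤ C * ‖m - x‖ ^ 2)
    (hmin : ∀ m ∈ S, bregmanDistSet p S x ≤ bregmanDist p m x) :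
    bregmanDistSet p S x ≤ C * Metric.infDist x S ^ 2 := by
  suffices √(bregmanDistSet p S x / C) ≤ Metric.infDist x S by
    rw [Real.sqrt_le_left Metric.infDist_nonneg, div_le_iff₀' hC] at this
    exact this
  refine (Metric.le_infDist hne).2 fun m hm => ?_
  rw [Real.sqrt_le_left dist_nonneg, div_le_iff₀' hC, dist_eq_norm']
  exact (hmin m hm).trans (hup m hm)

end Bregman

section PowerType

lemma modConvex_norm_sub_le {E : Type*} [NormedAddCommGroup E] {u v : E} (hu : ‖u‖ = 1)
    (hv : ‖v‖ = 1) : modConvex E ‖u - v‖ ≤ 1 - ‖u + v‖ / 2 := by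
  refine csInf_le ⟨0, ?_⟩ ⟨u, v, hu, hv, le_rfl, rfl⟩
  rintro _ ⟨x, y, hx, hy, -, rfl⟩
  linarith [norm_add_le x y]

lemma PowerConvex.exists_norm_add_le {E : Type*} [NormedAddCommGroup E] (hconv : PowerConvex E 2) :
    ∃ c > (0 : ℝ), ∀ u v : E, ‖u‖ = 1 → ‖v‖ = 1 → ‖u + v‖ ≤ 2 - 2 * c * ‖u - v‖ ^ 2 := by
  obtain ⟨c, hc, hmod⟩ := hconv
  refine ⟨c, hc, fun u v hu hv => ?_⟩
  have hle := hmod ‖u - v‖ ⟨norm_nonneg _, by linarith [norm_sub_le u v]⟩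
  rw [Real.rpow_two] at hle
  linarith [modConvex_norm_sub_le hu hv]

lemma norm_smul_add_smul_le {r s : ℝ} (hs : 0 ≤ s) (hsr : s ≤ r) (u v : X) :
    ‖r • u + s • v‖ ≤ s * ‖u + v‖ + (r - s) * ‖u‖ := by
  calc ‖r • u + s • v‖ = ‖s • (u + v) + (r - s) • u‖ := by congr 1; module
    _ ≤ ‖s • (u + v)‖ + ‖(r - s) • u‖ := norm_add_le _ _
    _ = s * ‖u + v‖ + (r - s) * ‖u‖ := by
      rw [norm_smul_of_nonneg hs, norm_smul_of_nonneg (sub_nonneg.2 hsr)]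

lemma norm_smul_add_smul_sq_le {c r s : ℝ} (hc : 0 ≤ c) (hs : 0 ≤ s) (hsr : s ≤ r) {u v : X}
    (hu : ‖u‖ = 1) (huv : ‖u + v‖ ≤ 2 - 2 * c * ‖u - v‖ ^ 2) :
    ‖r • u + s • v‖ ^ 2 / 4 ≤
      (r ^ 2 + s ^ 2) / 2 - min (1 / 8) (c / 2) * ‖r • u - s • v‖ ^ 2 := by
  set d := s * ‖u - v‖
  have hsum : ‖r • u + s • v‖ ≤ r + s - 2 * c * s * ‖u - v‖ ^ 2 := by
    have := norm_smul_add_smul_le hs hsr u v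
    rw [hu] at this
    linarith [mul_le_mul_of_nonneg_left huv hs]
  have hdiff : ‖r • u - s • v‖ ≤ d + (r - s) := by
    simpa only [smul_neg, ← sub_eq_add_neg, hu, mul_one] using norm_smul_add_smul_le hs hsr u (-v)
  have hsum_sq : ‖r • u + s • v‖ ^ 2 ≤ (r + s) ^ 2 - 4 * c * d ^ 2 := by
    have hdefect : 0 ≤ 2 * c * s * ‖u - v‖ ^ 2 := by positivity
    nlinarith [norm_nonneg (r • u + s • v), mul_nonneg hdefect (sub_nonneg.2 hsr)]
  have hdiff_sq : ‖r • u - s • v‖ ^ 2 ≤ 2 * (d ^ 2 + (r - s) ^ 2) :=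
    (pow_le_pow_left₀ (norm_nonneg _) hdiff 2).trans add_sq_le
  have hmin : min (1 / 8) (c / 2) * ‖r • u - s • v‖ ^ 2 ≤ c * d ^ 2 + (r - s) ^ 2 / 4 := by
    have : 0 ≤ min (1 / 8) (c / 2) := by positivity
    calc min (1 / 8) (c / 2) * ‖r • u - s • v‖ ^ 2
        ≤ min (1 / 8) (c / 2) * (2 * (d ^ 2 + (r - s) ^ 2)) := by gcongr
      _ = 2 * (min (1 / 8) (c / 2) * d ^ 2 + min (1 / 8) (c / 2) * (r - s) ^ 2) := by ring
      _ ≤ 2 * (c / 2 * d ^ 2 + 1 / 8 * (r - s) ^ 2) := by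
        gcongr
        · exact min_le_right _ _
        · exact min_le_left _ _
      _ = c * d ^ 2 + (r - s) ^ 2 / 4 := by ring
  linarith

theorem PowerConvex.exists_norm_add_sq_le (hconv : PowerConvex X 2) :
    ∃ c > (0 : ℝ), ∀ x y : X,
      ‖x + y‖ ^ 2 / 4 ≤ (‖x‖ ^ 2 + ‖y‖ ^ 2) / 2 - c * ‖x - y‖ ^ 2 := by
  obtain ⟨c, hc, hunit⟩ := hconv.exists_norm_add_le
  refine ⟨min (1 / 8) (c / 2), by positivity, fun x y => ?_⟩
  wlog hyx : ‖y‖ ≤ ‖x‖ generalizing x y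
  · simpa only [add_comm, norm_sub_rev] using this y x (le_of_not_ge hyx)
  rcases eq_or_ne y 0 with rfl | hy
  · have := mul_le_mul_of_nonneg_right (min_le_left (1 / 8) (c / 2)) (sq_nonneg ‖x‖)
    simp only [add_zero, sub_zero, norm_zero]
    linarith [sq_nonneg ‖x‖]
  have hx : x ≠ 0 := norm_pos_iff.1 ((norm_pos_iff.2 hy).trans_le hyx)
  have hu := NormedSpace.norm_normalize_eq_one_iff.2 hx
  have hv := NormedSpace.norm_normalize_eq_one_iff.2 hy
  simpa only [NormedSpace.norm_smul_normalize] using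
    norm_smul_add_smul_sq_le hc.le (norm_nonneg y) hyx hu (hunit _ _ hu hv)

theorem PowerConvex.exists_mul_norm_sub_sq_le_bregmanDist (hconv : PowerConvex X 2)
    (hdiff : Differentiable ℝ fun z : X => ‖z‖ ^ 2) :
    ∃ c > (0 : ℝ), ∀ x y : X, c * ‖x - y‖ ^ 2 ≤ bregmanDist 2 x y := by
  obtain ⟨c, hc, hmid⟩ := hconv.exists_norm_add_sq_le
  refine ⟨c, hc, fun x y => ?_⟩
  have hnonneg := bregmanDist_two_nonneg ((1 / 2 : ℝ) • (x + y)) (hdiff y)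
  have hsub : (1 / 2 : ℝ) • (x + y) - y = (1 / 2 : ℝ) • (x - y) := by module
  rw [bregmanDist_two, hsub, map_smul, smul_eq_mul, norm_smul_of_nonneg (by norm_num)] at hnonneg
  rw [bregmanDist_two]
  linarith [hmid x y]

lemma norm_add_add_norm_sub_le_modSmooth {x h : X} (hx : x ≠ 0) (hh : h ≠ 0) :
    ‖x + h‖ + ‖x - h‖ ≤ 2 * ‖x‖ * (1 + modSmooth X (‖h‖ / ‖x‖)) := by
  set τ := ‖h‖ / ‖x‖ with hτ
  set u := NormedSpace.normalize x
  set v := NormedSpace.normalize h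
  have hbdd : BddAbove {d : ℝ | ∃ x y : X, ‖x‖ = 1 ∧ ‖y‖ = 1 ∧
      d = (‖x + τ • y‖ + ‖x - τ • y‖) / 2 - 1} := by
    refine ⟨τ, ?_⟩
    rintro _ ⟨x, y, hx, hy, rfl⟩
    have hadd := norm_add_le x (τ • y)
    have hsub := norm_sub_le x (τ • y)
    rw [norm_smul_of_nonneg (by positivity), hx, hy] at hadd hsub
    linarith
  have hmod : (‖u + τ • v‖ + ‖u - τ • v‖) / 2 - 1 ≤ modSmooth X τ :=
    le_csSup hbdd ⟨u, v, NormedSpace.norm_normalize_eq_one_iff.2 hx,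
      NormedSpace.norm_normalize_eq_one_iff.2 hh, rfl⟩
  have hx' : ‖x‖ • u = x := NormedSpace.norm_smul_normalize x
  have hh' : ‖x‖ • τ • v = h := by
    rw [smul_smul, hτ, mul_div_cancel₀ _ (norm_ne_zero_iff.2 hx), NormedSpace.norm_smul_normalize]
  calc ‖x + h‖ + ‖x - h‖ = ‖x‖ * (‖u + τ • v‖ + ‖u - τ • v‖) := by
        rw [mul_add, ← norm_smul_of_nonneg (norm_nonneg x), ← norm_smul_of_nonneg (norm_nonneg x),
          smul_add, smul_sub, hx', hh']
    _ ≤ ‖x‖ * (2 * (1 + modSmooth X τ)) := by gcongr; linarith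
    _ = 2 * ‖x‖ * (1 + modSmooth X τ) := by ring

lemma abs_norm_add_sub_norm_sub_le (x h : X) : |‖x + h‖ - ‖x - h‖| ≤ 2 * ‖h‖ := by
  calc |‖x + h‖ - ‖x - h‖| ≤ ‖x + h - (x - h)‖ := abs_norm_sub_norm_le _ _
    _ = ‖(2 : ℝ) • h‖ := by congr 1; module
    _ = 2 * ‖h‖ := norm_smul_of_nonneg zero_le_two h

lemma norm_add_sq_add_norm_sub_sq_le {C : ℝ}
    (hmod : ∀ τ ∈ Set.Icc (0 : ℝ) 1, modSmooth X τ ≤ C * τ ^ 2) {x h : X}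
    (hh : h ≠ 0) (hhx : ‖h‖ ≤ ‖x‖) :
    ‖x + h‖ ^ 2 + ‖x - h‖ ^ 2 ≤ 2 * ‖x‖ ^ 2 + (2 + 4 * C + 2 * C ^ 2) * ‖h‖ ^ 2 := by
  have hx_pos : 0 < ‖x‖ := (norm_pos_iff.2 hh).trans_le hhx
  set τ := ‖h‖ / ‖x‖ with hτ
  have hτ_mem : τ ∈ Set.Icc (0 : ℝ) 1 := ⟨by positivity, (div_le_one hx_pos).2 hhx⟩
  have hτx : ‖h‖ = τ * ‖x‖ := by rw [hτ, div_mul_cancel₀ _ hx_pos.ne']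
  have hsum : ‖x + h‖ + ‖x - h‖ ≤ 2 * ‖x‖ * (1 + C * τ ^ 2) := by
    refine (norm_add_add_norm_sub_le_modSmooth (norm_pos_iff.1 hx_pos) hh).trans ?_
    gcongr
    exact hmod τ hτ_mem
  have hsum_sq : (‖x + h‖ + ‖x - h‖) ^ 2 ≤ 4 * ‖x‖ ^ 2 + (8 * C + 4 * C ^ 2) * ‖h‖ ^ 2 := by
    calc (‖x + h‖ + ‖x - h‖) ^ 2 ≤ (2 * ‖x‖ * (1 + C * τ ^ 2)) ^ 2 := by gcongr
      _ = 4 * ‖x‖ ^ 2 + 8 * C * ‖h‖ ^ 2 + 4 * C ^ 2 * ‖h‖ ^ 2 * τ ^ 2 := by rw [hτx]; ring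
      _ ≤ 4 * ‖x‖ ^ 2 + 8 * C * ‖h‖ ^ 2 + 4 * C ^ 2 * ‖h‖ ^ 2 * 1 := by
        gcongr
        exact pow_le_one₀ hτ_mem.1 hτ_mem.2
      _ = 4 * ‖x‖ ^ 2 + (8 * C + 4 * C ^ 2) * ‖h‖ ^ 2 := by ring
  have hdiff_sq : (‖x + h‖ - ‖x - h‖) ^ 2 ≤ (2 * ‖h‖) ^ 2 :=
    sq_le_sq.2 ((abs_norm_add_sub_norm_sub_le x h).trans (le_abs_self _))
  linarith

theorem PowerSmooth.exists_norm_add_sq_add_norm_sub_sq_le (hsmooth : PowerSmooth X 2) :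
    ∃ C > (0 : ℝ), ∀ x h : X, ‖x + h‖ ^ 2 + ‖x - h‖ ^ 2 ≤ 2 * ‖x‖ ^ 2 + C * ‖h‖ ^ 2 := by
  obtain ⟨-, C, hC, hmod⟩ := hsmooth
  simp only [Real.rpow_two] at hmod
  refine ⟨8 + 4 * C + 2 * C ^ 2, by positivity, fun x h => ?_⟩
  rcases eq_or_ne h 0 with rfl | hh
  · simp [two_mul]
  rcases le_total ‖h‖ ‖x‖ with hhx | hxh
  · linarith [norm_add_sq_add_norm_sub_sq_le hmod hh hhx, sq_nonneg ‖h‖]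
  · have hadd : ‖x + h‖ ≤ 2 * ‖h‖ := by linarith [norm_add_le x h]
    have hsub : ‖x - h‖ ≤ 2 * ‖h‖ := by linarith [norm_sub_le x h]
    calc ‖x + h‖ ^ 2 + ‖x - h‖ ^ 2 ≤ (2 * ‖h‖) ^ 2 + (2 * ‖h‖) ^ 2 := by gcongr
      _ = 8 * ‖h‖ ^ 2 := by ring
      _ ≤ 2 * ‖x‖ ^ 2 + (8 + 4 * C + 2 * C ^ 2) * ‖h‖ ^ 2 := by
        have : 0 ≤ 2 * ‖x‖ ^ 2 + (4 * C + 2 * C ^ 2) * ‖h‖ ^ 2 := by positivity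
        linarith

theorem PowerSmooth.differentiable_norm_sq (hsmooth : PowerSmooth X 2) :
    Differentiable ℝ fun x : X => ‖x‖ ^ 2 := by
  obtain ⟨C, -, hC⟩ := hsmooth.exists_norm_add_sq_add_norm_sub_sq_le
  intro x
  obtain ⟨φ, hφ⟩ := exists_subgradient_half_norm_sq x
  have hderiv : HasFDerivAt (fun z : X => 1 / 2 * ‖z‖ ^ 2) φ x :=
    hasFDerivAt_of_subgradient_of_add_le (C := C / 2) hφ fun h => by linarith [hC x h]
  simpa using hderiv.differentiableAt.const_mul (2 : ℝ)

theorem PowerSmooth.exists_bregmanDist_le_mul_norm_sub_sq (hsmooth : PowerSmooth X 2) :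
    ∃ C > (0 : ℝ), ∀ x y : X, bregmanDist 2 x y ≤ C * ‖x - y‖ ^ 2 := by
  obtain ⟨C, hC, hadd⟩ := hsmooth.exists_norm_add_sq_add_norm_sub_sq_le
  refine ⟨C / 2, by positivity, fun x y => ?_⟩
  have hreflect := bregmanDist_two_nonneg (y - (x - y)) (hsmooth.differentiable_norm_sq y)
  have hsecond := hadd y (x - y)
  rw [bregmanDist_two, sub_sub_cancel_left, map_neg] at hreflect
  rw [add_sub_cancel] at hsecond
  rw [bregmanDist_two]
  linarith

end PowerType

section Regularity

/-- Linear regularity of a pair of sets: the distance to the intersection is controlled linearly by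
the distances to the two sets. As `Metric.infDist x ∅ = 0`, disjoint sets are linearly regular. -/
def LinearRegular {α : Type*} [PseudoMetricSpace α] (S T : Set α) : Prop :=
  ∃ K > (0 : ℝ), ∀ x,
    Metric.infDist x (S ∩ T) ≤ K * max (Metric.infDist x S) (Metric.infDist x T)

/-- Linear Bregman regularity of a pair of sets: the analogue of `LinearRegular` with the distance
from `x` to a set replaced by the Bregman distance from `x` to its Bregman projection. -/
def LinearBregmanRegular (p : ℝ) (S T : Set X) : Prop :=
  ∃ κ > (0 : ℝ), ∀ x,
    bregmanDistSet p (S ∩ T) x ≤ κ * max (bregmanDistSet p S x) (bregmanDistSet p T x)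

lemma linearRegular_of_forall_dist {α : Type*} [PseudoMetricSpace α] {S T : Set α}
    (hS : S.Nonempty) (hT : T.Nonempty) {K : ℝ} (hK : 0 < K)
    (h : ∀ x, ∀ m ∈ S, ∀ n ∈ T, ∃ z ∈ S ∩ T, dist x z ≤ K * max (dist x m) (dist x n)) :
    LinearRegular S T := by
  refine ⟨K, hK, fun x => ?_⟩
  rw [← div_le_iff₀' hK]
  refine le_of_forall_gt_imp_ge_of_dense fun r hr => ?_
  obtain ⟨hrS, hrT⟩ := max_lt_iff.1 hr
  obtain ⟨m, hm, hxm⟩ := (Metric.infDist_lt_iff hS).1 hrS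
  obtain ⟨n, hn, hxn⟩ := (Metric.infDist_lt_iff hT).1 hrT
  obtain ⟨z, hz, hxz⟩ := h x m hm n hn
  rw [div_le_iff₀' hK]
  calc Metric.infDist x (S ∩ T) ≤ dist x z := Metric.infDist_le_dist_of_mem hz
    _ ≤ K * max (dist x m) (dist x n) := hxz
    _ ≤ K * r := by gcongr; exact max_le hxm.le hxn.le

theorem LinearRegular.linearBregmanRegular_two [CompleteSpace X] {S T : Set X}
    (hreg : LinearRegular S T) (hconv : PowerConvex X 2) (hsmooth : PowerSmooth X 2)
    (hS : IsClosed S) (hT : IsClosed T) (hSconv : Convex ℝ S) (hTconv : Convex ℝ T)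
    (hne : (S ∩ T).Nonempty) : LinearBregmanRegular 2 S T := by
  obtain ⟨K, hK, hreg⟩ := hreg
  obtain ⟨c, hc, hlow⟩ :=
    hconv.exists_mul_norm_sub_sq_le_bregmanDist hsmooth.differentiable_norm_sq
  obtain ⟨C, hC, hup⟩ := hsmooth.exists_bregmanDist_le_mul_norm_sub_sq
  refine ⟨C * K ^ 2 / c, by positivity, fun x => ?_⟩
  have hdist : ∀ {A : Set X}, IsClosed A → Convex ℝ A → A.Nonempty →
      c * Metric.infDist x A ^ 2 ≤ bregmanDistSet 2 A x := fun hA hAconv hAne =>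
    mul_infDist_sq_le_bregmanDistSet hc.le (fun m _ => hlow m x)
      (bregmanProj_two_spec hc hlow hA.isComplete hAconv hAne x).1
  have hmin := (bregmanProj_two_spec hc hlow (hS.inter hT).isComplete (hSconv.inter hTconv) hne x).2
  set R := max (Metric.infDist x S) (Metric.infDist x T)
  have hR : c * R ^ 2 ≤ max (bregmanDistSet 2 S x) (bregmanDistSet 2 T x) := by
    rcases max_choice (Metric.infDist x S) (Metric.infDist x T) with h | h
    · exact le_max_of_le_left (by simpa only [R, h] using hdist hS hSconv hne.left)
    · exact le_max_of_le_right (by simpa only [R, h] using hdist hT hTconv hne.right)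
  calc bregmanDistSet 2 (S ∩ T) x ≤ C * Metric.infDist x (S ∩ T) ^ 2 :=
        bregmanDistSet_le_mul_infDist_sq hC hne (fun m _ => hup m x) hmin
    _ ≤ C * (K * R) ^ 2 := by
        gcongr
        · exact Metric.infDist_nonneg
        · exact hreg x
    _ = C * K ^ 2 / c * (c * R ^ 2) := by field_simp
    _ ≤ C * K ^ 2 / c * max (bregmanDistSet 2 S x) (bregmanDistSet 2 T x) := by gcongr

end Regularity

section Subspaces

variable {𝕜 E : Type*} [NontriviallyNormedField 𝕜] [NormedAddCommGroup E] [NormedSpace 𝕜 E]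
  (M N : Submodule 𝕜 E) [CompleteSpace M] [CompleteSpace N]
  [CompleteSpace (M ⊔ N : Submodule 𝕜 E)]

lemma exists_add_eq_and_norm_le_of_mem_sup :
    ∃ K > (0 : ℝ), ∀ z ∈ M ⊔ N, ∃ m ∈ M, ∃ n ∈ N, m + n = z ∧ ‖m‖ ≤ K * ‖z‖ := by
  let sum : (M × N) →L[𝕜] (M ⊔ N : Submodule 𝕜 E) :=
    (M.subtypeL.coprod N.subtypeL).codRestrict (M ⊔ N) fun q => by
      simpa using Submodule.add_mem_sup q.1.2 q.2.2
  have hsum : ∀ q, (sum q : E) = q.1 + q.2 := fun q => by simp [sum]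
  have hsurj : Function.Surjective sum := by
    rintro ⟨z, hz⟩
    obtain ⟨m, hm, n, hn, rfl⟩ := Submodule.mem_sup.1 hz
    exact ⟨(⟨m, hm⟩, ⟨n, hn⟩), Subtype.ext (hsum _)⟩
  obtain ⟨K, hK, hpre⟩ := sum.exists_preimage_norm_le hsurj
  refine ⟨K, hK, fun z hz => ?_⟩
  obtain ⟨q, hq, hqz⟩ := hpre ⟨z, hz⟩
  exact ⟨q.1, q.1.2, q.2, q.2.2, by rw [← hsum, hq], (norm_fst_le q).trans hqz⟩

theorem linearRegular_of_completeSpace_sup : LinearRegular (M : Set E) N := by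
  obtain ⟨K, hK, hdecomp⟩ := exists_add_eq_and_norm_le_of_mem_sup M N
  refine linearRegular_of_forall_dist ⟨0, M.zero_mem⟩ ⟨0, N.zero_mem⟩
    (by positivity : 0 < 1 + 2 * K) fun x m hm n hn => ?_
  obtain ⟨m', hm', n', hn', hadd, hnorm⟩ := hdecomp (m - n)
    (sub_mem (Submodule.mem_sup_left hm) (Submodule.mem_sup_right hn))
  have hz : m - m' = n + n' := by rw [sub_eq_iff_eq_add, add_assoc, add_comm n', hadd]; abel
  refine ⟨m - m', ⟨M.sub_mem hm hm', hz ▸ N.add_mem hn hn'⟩, ?_⟩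
  set R := max (dist x m) (dist x n)
  have hxm : dist x m ≤ R := le_max_left _ _
  have hmn : ‖m - n‖ ≤ 2 * R := by
    rw [← dist_eq_norm]
    linarith [dist_triangle_left m n x, le_max_right (dist x m) (dist x n)]
  calc dist x (m - m') ≤ dist x m + dist m (m - m') := dist_triangle _ _ _
    _ = dist x m + ‖m'‖ := by rw [dist_self_sub_right]
    _ ≤ R + K * (2 * R) := by gcongr; exact hnorm.trans (by gcongr)
    _ = (1 + 2 * K) * R := by ring

end Subspaces

theorem statement8 {X : Type*} [NormedAddCommGroup X] [NormedSpace ℝ X] [CompleteSpace X]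
    (hconv : PowerConvex X 2) (hsmooth : PowerSmooth X 2)
    (M N : Submodule ℝ X) (hM : IsClosed (M : Set X)) (hN : IsClosed (N : Set X))
    (hMN : IsClosed ((M ⊔ N : Submodule ℝ X) : Set X)) :
    ∃ κ > (0 : ℝ), ∀ x : X,
      bregmanDist 2 (bregmanProj 2 ((M ⊓ N : Submodule ℝ X) : Set X) x) x ≤
        κ * max (bregmanDist 2 (bregmanProj 2 (M : Set X) x) x)
                (bregmanDist 2 (bregmanProj 2 (N : Set X) x) x) := by
  have : CompleteSpace M := hM.completeSpace_coe
  have : CompleteSpace N := hN.completeSpace_coe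
  have : CompleteSpace (M ⊔ N : Submodule ℝ X) := hMN.completeSpace_coe
  exact (linearRegular_of_completeSpace_sup M N).linearBregmanRegular_two hconv hsmooth hM hN
    M.convex N.convex ⟨0, zero_mem M, zero_mem N⟩
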